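/- The length of the shortest word in the intersection of the languages of one pushdown automaton of size O(n) and n finite-state automata each of size O(n) can be double exponential in n: for each n there exist such automata whose intersection is nonempty and whose shortest common word has length at least 2^{2^n}. -/

import Mathlib

/-- A stack operation of a pushdown automaton. -/
inductive StackOp (Γ : Type*) where
  | push (γ : Γ)
  | pop (γ : Γ)
  | nop

/-- The effect of a stack operation: `op.apply s s'` means performing `op`
on stack `s` yields stack `s'`. -/
def StackOp.apply {Γ : Type*} : StackOp Γ → List Γ → List Γ → Prop
  | .push γ, s, s' => s' = γ :: s
  | .pop γ, s, s' => s = γ :: s'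
  | .nop, s, s' => s' = s

/-- A pushdown automaton with states `Q`, stack symbols `Γ` and input alphabet `σ`.
Transitions read a letter or `ε` (`Option σ`) and perform one stack operation. -/
structure PDA (Q Γ σ : Type*) where
  trans : Set (Q × Option σ × StackOp Γ × Q)
  start : Q
  final : Set Q

/-- `P.Steps c w c' h` : there is a run of `P` from configuration `c` to `c'`
reading the word `w`, whose maximal stack height (over all configurations
of the run, endpoints included) is `h`. -/
inductive PDA.Steps {Q Γ σ : Type*} (P : PDA Q Γ σ) :
    Q × List Γ → List σ → Q × List Γ → ℕ → Prop where
  | refl (c : Q × List Γ) : PDA.Steps P c [] c c.2.length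
  | step {q q' : Q} {a : Option σ} {op : StackOp Γ} {s s' : List Γ}
      {w : List σ} {c : Q × List Γ} {h : ℕ} :
      (q, a, op, q') ∈ P.trans → op.apply s s' →
      PDA.Steps P (q', s') w c h →
      PDA.Steps P (q, s) (a.toList ++ w) c (max s.length h)

/-- The language of a PDA: acceptance by final state and empty stack,
starting from the initial state with empty stack. -/
def PDA.language {Q Γ σ : Type*} (P : PDA Q Γ σ) : Set (List σ) :=
  {w | ∃ f ∈ P.final, ∃ h, P.Steps (P.start, []) w (f, []) h}
/-- The alphabet `{0,1} ∪ {inc, dec} ∪ Γ₂`. -/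
inductive CtrSym (Γ : Type*) where
  | bit (b : Bool)
  | inc
  | dec
  | letter (g : Γ)
deriving DecidableEq

/-- Value of an `ℓ`-bit string, most significant bit first. -/
def bitsVal (bs : List Bool) : ℤ :=
  bs.foldl (fun acc b => 2 * acc + (if b then 1 else 0)) 0

/-- The operators: `inc` increments, `dec` decrements, letters of `Γ₂` keep
the value unchanged. (`bit` is not an operator.) -/
def CtrSym.isOp {Γ : Type*} : CtrSym Γ → Prop
  | .bit _ => False
  | _ => True

/-- Application of an operator to a value. -/
def CtrSym.applyOp {Γ : Type*} : CtrSym Γ → ℤ → ℤ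
  | .inc, v => v + 1
  | .dec, v => v - 1
  | _, v => v

/-- `ValidSeq ℓ prev l` : the sequence of (operator, ℓ-bit number) pairs `l` is a
valid counting sequence starting from the previous ℓ-bit number `prev`, where each
number is congruent modulo `2^ℓ` to the operator applied to the previous one. -/
def ValidSeq {Γ : Type*} (ℓ : ℕ) : List Bool → List (CtrSym Γ × List Bool) → Prop
  | _, [] => True
  | prev, (o, n) :: rest =>
      o.isOp ∧ n.length = ℓ ∧
      bitsVal n % (2 ^ ℓ : ℤ) = o.applyOp (bitsVal prev) % (2 ^ ℓ : ℤ) ∧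
      ValidSeq ℓ n rest

/-- The language `L_ℓ` of alternating sequences `n₀ o₁ n₁ o₂ n₂ ⋯ o_k n_k` of ℓ-bit
numbers and operators, where each operator applied to the previous number gives
the next number modulo `2^ℓ`. -/
def LCtr (Γ : Type*) (ℓ : ℕ) : Set (List (CtrSym Γ)) :=
  {w | ∃ (n₀ : List Bool) (rest : List (CtrSym Γ × List Bool)),
    n₀.length = ℓ ∧ ValidSeq ℓ n₀ rest ∧
    w = n₀.map CtrSym.bit ++ (rest.map fun p => p.1 :: p.2.map CtrSym.bit).flatten}


namespace DblExp

/-- States of the tree-traversal PDA. -/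
inductive St where
  | down
  | up
  | mid
deriving DecidableEq

instance : Fintype St := ⟨{.down, .up, .mid}, fun x => by cases x <;> simp⟩

/-- Transition relation of the tree-traversal PDA; stack symbol `false` marks
being inside the first child, `true` marks being inside the second child. -/
inductive Tr : St × Option (CtrSym Unit) × StackOp Bool × St → Prop where
  | downLetter : Tr (.down, some (.letter ()), .nop, .down)
  | downInc : Tr (.down, some .inc, .push false, .down)
  | leaf : Tr (.down, some (.bit true), .nop, .up)
  | toMid : Tr (.up, none, .pop false, .mid)
  | fromMid : Tr (.mid, none, .push true, .down)
  | upLetter : Tr (.up, some (.letter ()), .nop, .up)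
  | upDec : Tr (.up, some .dec, .pop true, .up)

/-- The tree-traversal PDA. -/
def pda : PDA St Bool (CtrSym Unit) where
  trans := {t | Tr t}
  start := .down
  final := {.up}

/-- Effect on bit `i` of incrementing when the flipped bit is `k`. -/
def incBit {n : ℕ} (i k : Fin n) (b : Bool) : Option Bool :=
  if i < k then (if b then some false else none)
  else if i = k then (if b then none else some true)
  else some b

/-- Effect on bit `i` of decrementing when the flipped bit is `k`. -/
def decBit {n : ℕ} (i k : Fin n) (b : Bool) : Option Bool :=
  if i < k then (if b then none else some true)
  else if i = k then (if b then some false else none)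
  else some b

theorem decBit_iff {n : ℕ} (i k : Fin n) (b b' : Bool) :
    decBit i k b = some b' ↔ incBit i k b' = some b := by
  unfold decBit incBit
  split_ifs <;> simp_all [eq_comm]

/-- Step of the `i`-th automaton on a live state. -/
def stepLive {n : ℕ} (i : Fin n) (k : Fin n) (b : Bool) :
    CtrSym Unit → Option (Fin n × Bool)
  | .letter _ => if h : k.1 + 1 < n then some (⟨k.1 + 1, h⟩, b) else none
  | .inc => (incBit i k b).map fun b' => (⟨0, i.pos⟩, b')
  | .dec => (decBit i k b).map fun b' => (⟨0, i.pos⟩, b')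
  | .bit _ => if b then some (k, b) else none

/-- The `i`-th finite automaton: it stores bit `i` and the number of letters read. -/
def dfa {n : ℕ} (i : Fin n) : DFA (CtrSym Unit) (Option (Fin n × Bool)) where
  step s a := s.bind fun p => stepLive i p.1 p.2 a
  start := some (⟨0, i.pos⟩, false)
  accept := {s | s ≠ none}

theorem evalFrom_none {n : ℕ} (i : Fin n) (w : List (CtrSym Unit)) :
    (dfa i).evalFrom none w = none := by
  induction w with
  | nil => rfl
  | cons a w ih => rw [DFA.evalFrom_cons]; exact ih

theorem step_some {n : ℕ} (i k : Fin n) (b : Bool) (a : CtrSym Unit) :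
    (dfa i).step (some (k, b)) a = stepLive i k b a := rfl

/-- Distance of the counter from its maximal value. -/
def D {n : ℕ} (b : Fin n → Bool) : ℕ := ∑ i, if b i then 0 else 2 ^ i.1

theorem aux_sum (k m : ℕ) :
    ∑ i ∈ Finset.range m, (if i < k then (-2 ^ i : ℤ) else if i = k then 2 ^ i else 0)
      = if m ≤ k then 1 - 2 ^ m else 1 := by
  induction m with
  | zero => simp
  | succ m ih =>
    rw [Finset.sum_range_succ, ih]
    rcases lt_trichotomy m k with h | h | h
    · rw [if_pos h.le, if_pos h, if_pos (by omega)]; ring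
    · subst h; simp
    · rw [if_neg (by omega), if_neg (by omega), if_neg (by omega), if_neg (by omega)]; ring

theorem D_inc {n : ℕ} (k : Fin n) (b b' : Fin n → Bool)
    (h : ∀ i, incBit i k (b i) = some (b' i)) : D b = D b' + 1 := by
  have key : (D b : ℤ) - D b' = 1 := by
    unfold D
    push_cast
    rw [← Finset.sum_sub_distrib]
    have h2 := aux_sum k.1 n
    rw [if_neg (by have := k.2; omega), ← Fin.sum_univ_eq_sum_range
      (fun i => if i < k.1 then (-2 ^ i : ℤ) else if i = k.1 then 2 ^ i else 0)] at h2
    rw [← h2]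
    apply Finset.sum_congr rfl
    intro i _
    have hi := h i
    unfold incBit at hi
    simp only [Fin.lt_def, Fin.ext_iff] at hi
    split_ifs at hi <;> simp_all
  omega

theorem D_zero {n : ℕ} (b : Fin n → Bool) : D b = 0 ↔ ∀ i, b i = true := by
  unfold D
  simp

theorem D_false (n : ℕ) : D (fun _ : Fin n => false) + 1 = 2 ^ n := by
  unfold D
  have := Fin.sum_univ_eq_sum_range (fun i => 2 ^ i) n
  simp only [Bool.false_eq_true, if_false]
  rw [this]
  have := Nat.geomSum_eq (le_refl 2) n
  rw [this]
  have : 0 < 2 ^ n := by positivity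
  simp; omega

theorem exists_inc {n : ℕ} (b : Fin n → Bool) (h : ¬ ∀ i, b i = true) :
    ∃ (k : Fin n) (b' : Fin n → Bool), ∀ i, incBit i k (b i) = some (b' i) := by
  have hex : ∃ m : ℕ, ∃ hm : m < n, b ⟨m, hm⟩ = false := by
    push Not at h
    obtain ⟨i, hi⟩ := h
    exact ⟨i.1, i.2, by simpa using hi⟩
  classical
  obtain ⟨hm, hb⟩ := Nat.find_spec hex
  have hmin := fun m => @Nat.find_min _ _ hex m
  refine ⟨⟨Nat.find hex, hm⟩, ?_⟩
  have : ∀ i, ∃ x, incBit i ⟨Nat.find hex, hm⟩ (b i) = some x := by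
    intro i
    unfold incBit
    split_ifs with h1 h2 h3 h4 <;> try simp
    · exact hmin i.1 h1 ⟨i.2, by simpa using h2⟩
    · subst h3; simp [hb] at h4
  choose b' hb' using this
  exact ⟨_, fun i => hb' i⟩

/-- Minimal length of a subtree traversal at distance `d`. -/
def g : ℕ → ℕ
  | 0 => 1
  | d + 1 => 2 * g d + 2

theorem g_eq (d : ℕ) : g d + 2 = 3 * 2 ^ d := by
  induction d with
  | zero => rfl
  | succ d ih => rw [g, pow_succ]; omega

/-- Potential of a stack. -/
def phiUp : List Bool → ℕ → ℕ
  | [], _ => 0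
  | false :: s, d => g d + 1 + phiUp s (d + 1)
  | true :: s, d => 1 + phiUp s (d + 1)

/-- Potential of a configuration. -/
def phi : St × List Bool → ℕ → ℕ
  | (.up, s), d => phiUp s d
  | (.down, s), d => g d + phiUp s d
  | (.mid, s), d => g d + 1 + phiUp s (d + 1)

theorem lower {n : ℕ} {c c' : St × List Bool} {w : List (CtrSym Unit)} {h : ℕ}
    (H : pda.Steps c w c' h) (hc : c' = (.up, [])) :
    ∀ (k : Fin n) (b : Fin n → Bool),
      (∀ i, (dfa i).evalFrom (some (k, b i)) w ≠ none) → phi c (D b) ≤ w.length := by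
  induction H with
  | refl c => subst hc; intro k b _; simp [phi, phiUp]
  | @step q q' a op s s' w c h ht hop _ ih =>
    intro k b hw
    have ih := ih hc
    change Tr _ at ht
    cases ht with
    | downLetter =>
      simp only [StackOp.apply] at hop; subst hop
      simp only [Option.toList_some, List.singleton_append, DFA.evalFrom_cons, step_some,
        stepLive] at hw
      by_cases hk : k.1 + 1 < n
      · simp only [hk, dif_pos] at hw
        have := ih _ b hw
        simp only [Option.toList_some, List.singleton_append, List.length_cons]; omega
      · simp only [hk] at hw
        exact absurd (evalFrom_none k w) (hw k)
    | upLetter =>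
      simp only [StackOp.apply] at hop; subst hop
      simp only [Option.toList_some, List.singleton_append, DFA.evalFrom_cons, step_some,
        stepLive] at hw
      by_cases hk : k.1 + 1 < n
      · simp only [hk, dif_pos] at hw
        have := ih _ b hw
        simp only [Option.toList_some, List.singleton_append, List.length_cons]; omega
      · simp only [hk] at hw
        exact absurd (evalFrom_none k w) (hw k)
    | downInc =>
      simp only [StackOp.apply] at hop; subst hop
      simp only [Option.toList_some, List.singleton_append, DFA.evalFrom_cons, step_some,
        stepLive] at hw
      have : ∀ i, ∃ x, incBit i k (b i) = some x := by
        intro i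
        cases hx : incBit i k (b i) with
        | some x => exact ⟨x, rfl⟩
        | none =>
          have := hw i
          rw [hx] at this
          exact absurd (evalFrom_none i w) this
      choose b' hb' using this
      have := ih ⟨0, k.pos⟩ b' (fun i => by have := hw i; rw [hb'] at this; exact this)
      rw [D_inc k b b' hb']
      simp only [phi, phiUp, g, Option.toList_some, List.singleton_append,
        List.length_cons] at this ⊢
      omega
    | upDec =>
      simp only [StackOp.apply] at hop; subst hop
      simp only [Option.toList_some, List.singleton_append, DFA.evalFrom_cons, step_some,
        stepLive] at hw
      have : ∀ i, ∃ x, decBit i k (b i) = some x := by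
        intro i
        cases hx : decBit i k (b i) with
        | some x => exact ⟨x, rfl⟩
        | none =>
          have := hw i
          rw [hx] at this
          exact absurd (evalFrom_none i w) this
      choose b' hb' using this
      have := ih ⟨0, k.pos⟩ b' (fun i => by have := hw i; rw [hb'] at this; exact this)
      rw [D_inc k b' b (fun i => (decBit_iff _ _ _ _).1 (hb' i))] at this
      simp only [phi, phiUp, Option.toList_some, List.singleton_append,
        List.length_cons] at this ⊢
      omega
    | leaf =>
      simp only [StackOp.apply] at hop; subst hop
      simp only [Option.toList_some, List.singleton_append, DFA.evalFrom_cons, step_some,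
        stepLive] at hw
      have hb : ∀ i, b i = true := by
        intro i
        by_contra hx
        have := hw i
        rw [if_neg hx] at this
        exact absurd (evalFrom_none i w) this
      have := ih k b (fun i => by have := hw i; rw [if_pos (hb i)] at this; exact this)
      rw [(D_zero b).2 hb] at this ⊢
      simp only [phi, g, Option.toList_some, List.singleton_append,
        List.length_cons] at this ⊢
      omega
    | toMid =>
      simp only [StackOp.apply] at hop; subst hop
      simpa [phi, phiUp] using ih k b (by simpa using hw)
    | fromMid =>
      simp only [StackOp.apply] at hop; subst hop
      have := ih k b (by simpa using hw)
      simp only [phi, phiUp, Option.toList_none, List.nil_append] at this ⊢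
      omega

/-- Reachability by a word, forgetting the stack height. -/
def Reach {Q Γ σ : Type*} (P : PDA Q Γ σ) (c : Q × List Γ) (w : List σ) (c' : Q × List Γ) :
    Prop := ∃ h, P.Steps c w c' h

theorem Reach.trans {Q Γ σ : Type*} {P : PDA Q Γ σ} {c c' c'' : Q × List Γ} {w w' : List σ}
    (h1 : Reach P c w c') (h2 : Reach P c' w' c'') : Reach P c (w ++ w') c'' := by
  obtain ⟨h, H⟩ := h1
  induction H with
  | refl c => exact h2
  | step ht hop _ ih =>
    obtain ⟨h', H'⟩ := ih h2
    rw [List.append_assoc]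
    exact ⟨_, .step ht hop H'⟩

theorem Reach.single {Q Γ σ : Type*} {P : PDA Q Γ σ} {q q' : Q} {a : Option σ}
    {op : StackOp Γ} {s s' : List Γ} (ht : (q, a, op, q') ∈ P.trans) (hop : op.apply s s') :
    Reach P (q, s) a.toList (q', s') := by
  have := PDA.Steps.step ht hop (.refl _)
  rw [List.append_nil] at this
  exact ⟨_, this⟩

theorem reach_letters (q : St) (hq : Tr (q, some (.letter ()), .nop, q)) (s : List Bool)
    (m : ℕ) : Reach pda (q, s) (List.replicate m (.letter ())) (q, s) := by
  induction m with
  | zero => exact ⟨_, .refl _⟩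
  | succ m ih =>
    have h1 : Reach pda (q, s) _ (q, s) := Reach.single hq rfl
    exact h1.trans ih

theorem eval_letters {n : ℕ} (i : Fin n) (b : Bool) (m : ℕ) : ∀ (j : ℕ) (h : j + m < n),
    (dfa i).evalFrom (some (⟨j, by omega⟩, b)) (List.replicate m (.letter ())) =
      some (⟨j + m, h⟩, b) := by
  induction m with
  | zero => intro j h; rfl
  | succ m ih =>
    intro j h
    rw [List.replicate_succ, DFA.evalFrom_cons, step_some]
    simp only [stepLive]
    rw [dif_pos (by omega), ih (j + 1) (by omega)]
    simp; omega

theorem upper {n : ℕ} (hn : 0 < n) (d : ℕ) : ∀ (b : Fin n → Bool), D b = d →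
    ∃ w, (∀ s, Reach pda (.down, s) w (.up, s)) ∧
      ∀ i, (dfa i).evalFrom (some (⟨0, hn⟩, b i)) w = some (⟨0, hn⟩, b i) := by
  induction d with
  | zero =>
    intro b hb
    rw [D_zero] at hb
    refine ⟨[.bit true], fun s => ?_, fun i => ?_⟩
    · exact Reach.single (P := pda) (a := some (.bit true)) Tr.leaf rfl
    · simp [step_some, stepLive, hb, DFA.evalFrom]
  | succ d ih =>
    intro b hb
    have hnb : ¬ ∀ i, b i = true := by rw [← D_zero]; omega
    obtain ⟨k, b', hk⟩ := exists_inc b hnb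
    have hD := D_inc k b b' hk
    obtain ⟨w, hw, hw'⟩ := ih b' (by omega)
    refine ⟨List.replicate k.1 (.letter ()) ++ ([.inc] ++ (w ++ ([] ++ ([] ++ (w ++
      (List.replicate k.1 (.letter ()) ++ [.dec])))))), fun s => ?_, fun i => ?_⟩
    · refine (reach_letters _ .downLetter s _).trans ?_
      refine (Reach.single (P := pda) (a := some .inc) Tr.downInc rfl).trans ?_
      refine (hw _).trans ?_
      refine (Reach.single (P := pda) (a := none) Tr.toMid rfl).trans ?_
      refine (Reach.single (P := pda) (a := none) Tr.fromMid rfl).trans ?_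
      refine (hw _).trans ?_
      refine (reach_letters _ .upLetter _ _).trans ?_
      exact Reach.single (P := pda) (a := some .dec) Tr.upDec rfl
    · have e1 := fun x => eval_letters i x k.1 0 (by have := k.2; omega)
      have e2 : (dfa i).evalFrom (some (k, b i)) [.inc] = some (⟨0, hn⟩, b' i) := by
        simp [step_some, stepLive, hk, DFA.evalFrom]
      have e3 : (dfa i).evalFrom (some (k, b' i)) [.dec] = some (⟨0, hn⟩, b i) := by
        simp [step_some, stepLive, (decBit_iff _ _ _ _).2 (hk i), DFA.evalFrom]
      simp only [zero_add] at e1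
      simp only [DFA.evalFrom_of_append, e1, hw', e2, e3, List.nil_append]

/-- Relabelling of the stack symbols. -/
def mapOp {Γ Γ' : Type*} (f : Γ → Γ') : StackOp Γ → StackOp Γ'
  | .push γ => .push (f γ)
  | .pop γ => .pop (f γ)
  | .nop => .nop

theorem steps_map {Q Γ Q' Γ' σ : Type*} {P : PDA Q Γ σ} {P' : PDA Q' Γ' σ} (f : Q → Q')
    (e : Γ → Γ')
    (hf : ∀ q a op q', (q, a, op, q') ∈ P.trans → (f q, a, mapOp e op, f q') ∈ P'.trans)
    {c c' : Q × List Γ} {w : List σ} (H : Reach P c w c') :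
    Reach P' (f c.1, c.2.map e) w (f c'.1, c'.2.map e) := by
  obtain ⟨h, H⟩ := H
  induction H with
  | refl c => exact ⟨_, .refl _⟩
  | @step q q' a op s s' w c h ht hop _ ih =>
    refine (Reach.single (hf _ _ _ _ ht) ?_).trans ih
    cases op <;> simp_all [StackOp.apply, mapOp]

theorem dfa_transport {α Q Q' : Type*} (A : DFA α Q) (f : Q → Q') (r : Q' → Q)
    (hr : ∀ x, r (f x) = x) : ∃ B : DFA α Q', ∀ w, w ∈ B.accepts ↔ w ∈ A.accepts := by
  refine ⟨⟨fun q a => f (A.step (r q) a), f A.start, {q | r q ∈ A.accept}⟩, fun w => ?_⟩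
  rw [DFA.mem_accepts, DFA.mem_accepts]
  change r _ ∈ A.accept ↔ _
  suffices h : ∀ q, r (DFA.evalFrom ⟨fun q a => f (A.step (r q) a), f A.start,
      {q | r q ∈ A.accept}⟩ q w) = A.evalFrom (r q) w by
    have := h (f A.start)
    rw [hr] at this
    rw [← DFA.eval] at this
    exact iff_of_eq (congrArg (· ∈ A.accept) this)
  induction w with
  | nil => intro q; rfl
  | cons a w ih =>
    intro q
    rw [DFA.evalFrom_cons, DFA.evalFrom_cons, ih, hr]

theorem pda_transport {σ Q Γ Q' Γ' : Type*} (P : PDA Q Γ σ) (f : Q → Q') (r : Q' → Q)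
    (hr : ∀ x, r (f x) = x) (e : Γ → Γ') (t : Γ' → Γ) (ht : ∀ x, t (e x) = x) :
    ∃ P' : PDA Q' Γ' σ, ∀ w, w ∈ P'.language ↔ w ∈ P.language := by
  refine ⟨⟨{x | (r x.1, x.2.1, mapOp t x.2.2.1, r x.2.2.2) ∈ P.trans}, f P.start,
    {q | r q ∈ P.final}⟩, fun w => ⟨?_, ?_⟩⟩
  · rintro ⟨q, hq, H⟩
    refine ⟨r q, hq, ?_⟩
    have := steps_map (P' := P) r t (fun _ _ _ _ h => h) H
    simp only [hr, List.map_nil] at this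
    exact this
  · rintro ⟨q, hq, H⟩
    refine ⟨f q, by simpa [hr] using hq, ?_⟩
    refine steps_map f e (fun q a op q' h => ?_) H
    have : mapOp t (mapOp e op) = op := by cases op <;> simp [mapOp, ht]
    simpa [hr, this] using h

theorem exists_retract {Q : Type*} [Fintype Q] [Nonempty Q] {m : ℕ}
    (h : Fintype.card Q ≤ m) : ∃ (f : Q → Fin m) (r : Fin m → Q), ∀ x, r (f x) = x := by
  obtain ⟨f⟩ : Nonempty (Q ↪ Fin m) :=
    Function.Embedding.nonempty_of_card_le (by simpa using h)
  exact ⟨f, Function.invFun f, Function.leftInverse_invFun f.injective⟩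

instance : Nonempty St := ⟨.down⟩

end DblExp

/-- there is a constant `c` such that for every `n ≥ 1` there are a
PDA of size at most `c·n` (states plus stack symbols) and `n` finite-state automata
with at most `c·n` states each, whose intersection is nonempty but whose shortest
common word has length at least `2^(2^n)`. -/
theorem shortest_word_double_exponential :
    ∃ c : ℕ, ∀ n : ℕ, 1 ≤ n →
      ∃ (P : PDA (Fin (c * n)) (Fin (c * n)) (CtrSym Unit))
        (Bs : Fin n → DFA (CtrSym Unit) (Fin (c * n))),
        (∃ w : List (CtrSym Unit), w ∈ P.language ∧ ∀ i, w ∈ (Bs i).accepts) ∧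
        ∀ w : List (CtrSym Unit), w ∈ P.language → (∀ i, w ∈ (Bs i).accepts) →
          2 ^ (2 ^ n) ≤ w.length := by
  refine ⟨3, fun n hn => ?_⟩
  obtain ⟨f, r, hr⟩ := DblExp.exists_retract (Q := DblExp.St) (m := 3 * n)
    (by have : Fintype.card DblExp.St = 3 := rfl
        omega)
  obtain ⟨e, t, het⟩ := DblExp.exists_retract (Q := Bool) (m := 3 * n)
    (by simp; omega)
  obtain ⟨f', r', hr'⟩ := DblExp.exists_retract (Q := Option (Fin n × Bool)) (m := 3 * n)
    (by simp; omega)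
  obtain ⟨P, hP⟩ := DblExp.pda_transport DblExp.pda f r hr e t het
  choose B hB using fun i : Fin n => DblExp.dfa_transport (DblExp.dfa i) f' r' hr'
  refine ⟨P, B, ?_, ?_⟩
  · obtain ⟨w, hw, hw'⟩ := DblExp.upper hn _ (fun _ : Fin n => false) rfl
    refine ⟨w, (hP w).2 ⟨.up, rfl, hw []⟩, fun i => (hB i w).2 ?_⟩
    rw [DFA.mem_accepts]
    change DFA.evalFrom _ _ _ ≠ none
    have := hw' i
    change (DblExp.dfa i).evalFrom (some (⟨0, hn⟩, false)) w ≠ none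
    rw [this]
    simp
  · intro w hw hB'
    obtain ⟨q, hq, h, H⟩ := (hP w).1 hw
    have hq : q = .up := hq
    subst hq
    have := DblExp.lower H rfl ⟨0, hn⟩ (fun _ : Fin n => false)
      (fun i => (hB i w).1 (hB' i))
    change DblExp.g _ + 0 ≤ _ at this
    have h1 := DblExp.g_eq (DblExp.D (fun _ : Fin n => false))
    have h2 := DblExp.D_false n
    rw [← h2, pow_succ]
    have h3 : 2 ^ 1 ≤ 2 ^ n := Nat.pow_le_pow_right (by norm_num) hn
    have h4 : 2 ^ 1 ≤ 2 ^ (DblExp.D (fun _ : Fin n => false)) :=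
      Nat.pow_le_pow_right (by norm_num) (by omega)
    omega
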